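/- For each T ≥ 1 there exists a smooth, radially symmetric function φ_T : ℝ × ℝ² → ℝ solving the linear wave equation ∂_t²φ_T = Δφ_T on ℝ × ℝ², whose initial data (φ_T(0,·), ∂_tφ_T(0,·)) are compactly supported, and for every integer k ≥ 1 a constant c_k > 0 (independent of T) such that for every p ∈ [0,1) and every T ≥ 1: ∫₀^T ∫₀^{2π} ∫₀^1 φ_T(t,r,θ)² dr dθ dt ≥ c_k · T^{2k−1−p} · Σ_{j=0}^{k} ∫_{ℝ²} (1+|x|)^p · (∂_t^j ∂_r^{k−j} φ_T)²(0,x) dx, where ∂_r denotes the radial derivative and φ_T(t,r,θ) denotes φ_T in polar coordinates. In particular, there is no uniform integrated local energy decay estimate of the form ∫₀^∞ ∫₀^{2π} ∫₀^1 φ(t,r,θ)² dr dθ dt ≤ C·∫_{ℝ²} (|∂_tφ|² + |∇φ|²)(0,x) dx valid for all smooth solutions φ of the wave equation on ℝ^{2+1} with compactly supported data. -/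

import Mathlib

open MeasureTheory Real Set

noncomputable section

/-- The point of `ℝ²` with polar coordinates `(r,θ)`. -/
def polarPt (r θ : ℝ) : EuclideanSpace ℝ (Fin 2) :=
  (WithLp.equiv 2 (Fin 2 → ℝ)).symm ![r * Real.cos θ, r * Real.sin θ]

/-- The radial derivative `∂_r g(x) = ⟨x/|x|, ∇g(x)⟩`. -/
def radialDeriv (g : EuclideanSpace ℝ (Fin 2) → ℝ) : EuclideanSpace ℝ (Fin 2) → ℝ :=
  fun x => fderiv ℝ g x (‖x‖⁻¹ • x)

/-- The Euclidean Laplacian on `ℝ²`. -/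
def lap2 (g : EuclideanSpace ℝ (Fin 2) → ℝ) : EuclideanSpace ℝ (Fin 2) → ℝ :=
  fun x => ∑ i : Fin 2,
    fderiv ℝ (fun y => fderiv ℝ g y (EuclideanSpace.single i 1)) x (EuclideanSpace.single i 1)

/-- `ψ` solves the wave equation `∂_t²ψ = Δψ` on `ℝ × ℝ²`. -/
def SolvesWave (ψ : ℝ → EuclideanSpace ℝ (Fin 2) → ℝ) : Prop :=
  ∀ (t : ℝ) (x : EuclideanSpace ℝ (Fin 2)),
    deriv (fun s => deriv (fun s' => ψ s' x) s) t = lap2 (ψ t) x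

/-- The initial data of `ψ` are compactly supported. -/
def CompactData (ψ : ℝ → EuclideanSpace ℝ (Fin 2) → ℝ) : Prop :=
  ∃ K : Set (EuclideanSpace ℝ (Fin 2)), IsCompact K ∧
    ∀ x ∉ K, ψ 0 x = 0 ∧ deriv (fun s => ψ s x) 0 = 0


namespace ILED
open scoped ContDiff Topology
open Filter

lemma param_hasFDerivAt {P F : Type} [NormedAddCommGroup P] [NormedSpace ℝ P] [FiniteDimensional ℝ P]
    [NormedAddCommGroup F] [NormedSpace ℝ F] [CompleteSpace F]
    (h : P × ℝ → F) (h' : P × ℝ → P →L[ℝ] F) (hc : Continuous h) (hc' : Continuous h')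
    (hd : ∀ p z, HasFDerivAt (fun p => h (p, z)) (h' (p, z)) p) (a b : ℝ) (p : P) :
    HasFDerivAt (fun p => ∫ z in a..b, h (p, z)) (∫ z in a..b, h' (p, z)) p := by
  have hK : IsCompact (Metric.closedBall p 1 ×ˢ Set.uIcc a b) :=
    (isCompact_closedBall p 1).prod isCompact_uIcc
  obtain ⟨C, hC⟩ := hK.exists_bound_of_continuousOn hc'.continuousOn
  refine intervalIntegral.hasFDerivAt_integral_of_dominated_of_fderiv_le
    (F := fun p z => h (p, z)) (F' := fun p z => h' (p, z)) (bound := fun _ => C)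
    (Metric.closedBall_mem_nhds p one_pos) ?_ ?_ ?_ ?_ ?_ ?_
  · filter_upwards with x
    exact (by fun_prop : Continuous fun z => h (x, z)).aestronglyMeasurable
  · exact (by fun_prop : Continuous fun z => h (p, z)).intervalIntegrable _ _
  · exact (by fun_prop : Continuous fun z => h' (p, z)).aestronglyMeasurable
  · filter_upwards with z hz x hx
    exact hC (x, z) ⟨hx, Set.uIoc_subset_uIcc hz⟩
  · exact intervalIntegrable_const
  · filter_upwards with z _ x _
    exact hd x z

lemma hasFDerivAt_slice {P F : Type} [NormedAddCommGroup P] [NormedSpace ℝ P]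
    [NormedAddCommGroup F] [NormedSpace ℝ F] (h : P × ℝ → F) (hh : Differentiable ℝ h) (p : P) (z : ℝ) :
    HasFDerivAt (fun p => h (p, z))
      ((fderiv ℝ h (p, z)).comp (ContinuousLinearMap.inl ℝ P ℝ)) p := by
  have h1 := (hh (p, z)).hasFDerivAt
  have h2 : HasFDerivAt (fun p : P => (p, z)) (ContinuousLinearMap.inl ℝ P ℝ) p :=
    hasFDerivAt_prodMk_left p z
  exact HasFDerivAt.comp p h1 h2

lemma param_contDiff_nat (n : ℕ) : ∀ {P F : Type} [NormedAddCommGroup P] [NormedSpace ℝ P]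
    [FiniteDimensional ℝ P] [NormedAddCommGroup F] [NormedSpace ℝ F] [CompleteSpace F]
    (h : P × ℝ → F), ContDiff ℝ ∞ h → ∀ (a b : ℝ), 
    ContDiff ℝ n (fun p => ∫ z in a..b, h (p, z)) := by
  induction n with
  | zero =>
    intro P F _ _ _ _ _ _ h hh a b
    have := hh.continuous
    simp only [CharP.cast_eq_zero, contDiff_zero]
    exact intervalIntegral.continuous_parametric_intervalIntegral_of_continuous'
      (f := fun p z => h (p, z)) (by simpa [Function.uncurry_def] using this) a b
  | succ n ih =>
    intro P F _ _ _ _ _ _ h hh a b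
    have hd := hh.differentiable (by simp)
    let h' : P × ℝ → P →L[ℝ] F := fun q => (fderiv ℝ h q).comp (ContinuousLinearMap.inl ℝ P ℝ)
    have hs : ContDiff ℝ ∞ h' := by
      have : ContDiff ℝ ∞ (fderiv ℝ h) := hh.fderiv_right (by simp)
      fun_prop
    have key := param_hasFDerivAt h h' hh.continuous hs.continuous 
      (fun p z => hasFDerivAt_slice h hd p z) a b
    push_cast
    rw [contDiff_succ_iff_fderiv]
    refine ⟨fun p => (key p).differentiableAt, by simp, ?_⟩
    have : fderiv ℝ (fun p => ∫ z in a..b, h (p, z)) = fun p => ∫ z in a..b, h' (p, z) := by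
      ext1 p; exact (key p).fderiv
    rw [this]
    exact ih h' hs a b

lemma param_contDiff {P F : Type} [NormedAddCommGroup P] [NormedSpace ℝ P]
    [FiniteDimensional ℝ P] [NormedAddCommGroup F] [NormedSpace ℝ F] [CompleteSpace F]
    (h : P × ℝ → F) (hh : ContDiff ℝ ∞ h) (a b : ℝ) :
    ContDiff ℝ ∞ (fun p => ∫ z in a..b, h (p, z)) := by
  rw [contDiff_infty]
  exact fun n => param_contDiff_nat n h hh a b

/-- directional derivative under the integral -/
lemma param_fderiv_apply {P : Type} [NormedAddCommGroup P] [NormedSpace ℝ P]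
    [FiniteDimensional ℝ P] 
    (h : P × ℝ → ℝ) (hh : ContDiff ℝ ∞ h) (a b : ℝ) (p v : P) :
    fderiv ℝ (fun p => ∫ z in a..b, h (p, z)) p v = ∫ z in a..b, fderiv ℝ h (p, z) (v, 0) := by
  have hd := hh.differentiable (by simp)
  have hs : ContDiff ℝ ∞ (fderiv ℝ h) := hh.fderiv_right (by simp)
  have hs' : Continuous (fun q => (fderiv ℝ h q).comp (ContinuousLinearMap.inl ℝ P ℝ)) := by
    have := hs.continuous
    fun_prop
  have key := param_hasFDerivAt h _ hh.continuous hs'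
      (fun p z => hasFDerivAt_slice h hd p z) a b p
  rw [key.fderiv, ContinuousLinearMap.intervalIntegral_apply]
  · simp
  · exact (by fun_prop : Continuous _).intervalIntegrable _ _

lemma cd_deriv {g : ℝ → ℝ} (hg : ContDiff ℝ ∞ g) : ContDiff ℝ ∞ (deriv g) :=
  ContDiff.deriv' (n := ∞) (by simpa using hg)

/-- `h_k[g](t,R)` -/
def hk (k : ℕ) (g : ℝ → ℝ) (q : ℝ × ℝ) : ℝ := ∫ s in (-1:ℝ)..1, (1 - s^2)^k * g (q.1 + s * q.2)

lemma hk_contDiff (k : ℕ) (g : ℝ → ℝ) (hg : ContDiff ℝ ∞ g) : ContDiff ℝ ∞ (hk k g) := by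
  unfold hk
  exact param_contDiff (fun w : (ℝ × ℝ) × ℝ => (1 - w.2^2)^k * g (w.1.1 + w.2 * w.1.2)) (by fun_prop) _ _

/-- integration by parts identity -/
lemma hk_parts (k : ℕ) (g : ℝ → ℝ) (hg : ContDiff ℝ ∞ g) (t R : ℝ) :
    ∫ s in (-1:ℝ)..1, (1 - s^2)^k * (s * deriv g (t + s * R)) =
      R / (2 * (k + 1)) * hk (k+1) (deriv (deriv g)) (t, R) := by
  have h1 : ContDiff ℝ ∞ (deriv g) := cd_deriv hg
  have h2 : ContDiff ℝ ∞ (deriv (deriv g)) := cd_deriv h1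
  have hd := h1.differentiable (by simp)
  have c1 := h1.continuous
  have c2 := h2.continuous
  have hder : ∀ s ∈ uIcc (-1:ℝ) 1, HasDerivAt (fun s : ℝ => (1 - s^2)^(k+1) * deriv g (t + s * R))
     (-(2 * (k+1)) * ((1 - s^2)^k * (s * deriv g (t + s * R))) + 
      R * ((1-s^2)^(k+1) * deriv (deriv g) (t + s * R))) s := by
    intro s _
    have e1 : HasDerivAt (fun s : ℝ => 1 - s^2) (-(2 * s)) s := by
      simpa using ((hasDerivAt_pow 2 s).const_sub 1)
    have e2 := e1.pow (k+1)
    have e3 : HasDerivAt (fun s : ℝ => t + s * R) R s := by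
      simpa using ((hasDerivAt_id s).mul_const R).const_add t
    have e4 := (hd (t + s * R)).hasDerivAt.comp s e3
    refine (e2.mul e4).congr_deriv ?_
    simp; ring
  have key := intervalIntegral.integral_eq_sub_of_hasDerivAt hder 
    ((by fun_prop : Continuous _).intervalIntegrable _ _)
  rw [intervalIntegral.integral_add ((by fun_prop : Continuous _).intervalIntegrable _ _)
    ((by fun_prop : Continuous _).intervalIntegrable _ _), intervalIntegral.integral_const_mul,
    intervalIntegral.integral_const_mul] at key
  norm_num at key
  unfold hk
  have : (k:ℝ) + 1 ≠ 0 := by positivity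
  rw [div_mul_eq_mul_div, eq_div_iff (by positivity)]
  linarith

lemma hk_hasFDerivAt (k : ℕ) (g : ℝ → ℝ) (hg : ContDiff ℝ ∞ g) (t R : ℝ) :
    HasFDerivAt (hk k g) (hk k (deriv g) (t, R) • ContinuousLinearMap.fst ℝ ℝ ℝ +
      (R / (2 * (k + 1)) * hk (k+1) (deriv (deriv g)) (t, R)) • ContinuousLinearMap.snd ℝ ℝ ℝ) (t, R) := by
  have hd := hg.differentiable (by simp)
  have h1 : ContDiff ℝ ∞ (deriv g) := cd_deriv hg
  have c1 := h1.continuous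
  have c0 := hg.continuous
  have := param_hasFDerivAt (fun w : (ℝ × ℝ) × ℝ => (1 - w.2^2)^k * g (w.1.1 + w.2 * w.1.2))
    (fun w => ((1 - w.2^2)^k * deriv g (w.1.1 + w.2 * w.1.2)) • ContinuousLinearMap.fst ℝ ℝ ℝ +
     ((1 - w.2^2)^k * (w.2 * deriv g (w.1.1 + w.2 * w.1.2))) • ContinuousLinearMap.snd ℝ ℝ ℝ)
    (by fun_prop) (by fun_prop) ?_ (-1) 1 (t, R)
  · refine this.congr_fderiv ?_
    rw [intervalIntegral.integral_add ((by fun_prop : Continuous _).intervalIntegrable _ _)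
      ((by fun_prop : Continuous _).intervalIntegrable _ _), intervalIntegral.integral_smul_const,
      intervalIntegral.integral_smul_const, hk_parts k g hg]
    rfl
  · intro p z
    have e1 : HasFDerivAt (fun p : ℝ × ℝ => p.1 + z * p.2)
       (ContinuousLinearMap.fst ℝ ℝ ℝ + z • ContinuousLinearMap.snd ℝ ℝ ℝ) p :=
      hasFDerivAt_fst.add (hasFDerivAt_snd.const_mul z)
    have e2 := (hd (p.1 + z * p.2)).hasDerivAt.comp_hasFDerivAt p e1
    refine (e2.const_mul ((1 - z^2)^k)).congr_fderiv ?_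
    ext
    · simp
    · simp only [ContinuousLinearMap.comp_apply, ContinuousLinearMap.smul_apply,
        ContinuousLinearMap.add_apply, ContinuousLinearMap.coe_fst', ContinuousLinearMap.coe_snd',
        ContinuousLinearMap.inr_apply, smul_eq_mul]
      ring

end ILED


namespace ILED
open scoped ContDiff Topology
open Filter

abbrev E2 := EuclideanSpace ℝ (Fin 2)
abbrev P4 := (ℝ × E2) × ℝ

def rho (p : P4) : ℝ := √(‖p.1.2‖^2 + p.2^2)

def uu (k : ℕ) (g : ℝ → ℝ) (p : P4) : ℝ := hk k g (p.1.1, rho p)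

def dt4 : P4 →L[ℝ] ℝ := (ContinuousLinearMap.fst ℝ ℝ E2).comp (ContinuousLinearMap.fst ℝ (ℝ × E2) ℝ)

def BB (p : P4) : P4 →L[ℝ] ℝ := (innerSL ℝ p.1.2).comp
  ((ContinuousLinearMap.snd ℝ ℝ E2).comp (ContinuousLinearMap.fst ℝ (ℝ × E2) ℝ)) +
   p.2 • ContinuousLinearMap.snd ℝ (ℝ × E2) ℝ

lemma BB_apply (p v : P4) : BB p v = inner ℝ p.1.2 v.1.2 + p.2 * v.2 := by
  simp [BB]

lemma dt4_apply (v : P4) : dt4 v = v.1.1 := rfl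

lemma BB_contDiff : ContDiff ℝ ∞ BB := by
  have h : ContDiff ℝ ∞ (fun p : P4 => innerSL ℝ p.1.2) :=
    (innerSL ℝ (E := E2)).contDiff.comp (contDiff_snd.comp contDiff_fst)
  exact (h.clm_comp contDiff_const).add (contDiff_snd.smul contDiff_const)

lemma rho_nonneg (p : P4) : 0 ≤ rho p := Real.sqrt_nonneg _
lemma rho_sq (p : P4) : rho p ^ 2 = ‖p.1.2‖^2 + p.2^2 := Real.sq_sqrt (by positivity)

lemma rho_le (p : P4) : rho p ≤ 2 * ‖p‖ := by
  have h1 : ‖p.1.2‖ ≤ ‖p‖ := (norm_snd_le p.1).trans (norm_fst_le p)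
  have h2 : |p.2| ≤ ‖p‖ := norm_snd_le p
  have h3 := rho_sq p
  have h5 : p.2^2 ≤ ‖p‖^2 := sq_le_sq' (by linarith [neg_abs_le p.2]) (by linarith [le_abs_self p.2])
  have h4 : ‖p.1.2‖^2 ≤ ‖p‖^2 := by gcongr
  apply abs_le_of_sq_le_sq' _ (by positivity) |>.2
  nlinarith [norm_nonneg p]

lemma uu_hasFDerivAt (k : ℕ) (g : ℝ → ℝ) (hg : ContDiff ℝ ∞ g) (p : P4) :
    HasFDerivAt (uu k g) (uu k (deriv g) p • dt4 + 
      (1 / (2 * ((k:ℝ) + 1)) * uu (k+1) (deriv (deriv g)) p) • BB p) p := by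
  have H := hk_hasFDerivAt k g hg p.1.1 (rho p)
  have h1 : HasFDerivAt (fun p : P4 => p.1.1) dt4 p := dt4.hasFDerivAt
  by_cases h0 : rho p = 0
  · have hsq := rho_sq p
    rw [h0] at hsq
    have hx : p.1.2 = 0 := by
      have : ‖p.1.2‖^2 = 0 := by nlinarith [sq_nonneg ‖p.1.2‖, sq_nonneg p.2]
      simpa using this
    have hz : p.2 = 0 := by
      have : p.2^2 = 0 := by nlinarith [sq_nonneg ‖p.1.2‖, sq_nonneg p.2]
      simpa using this
    have hB : BB p = 0 := by
      ext v <;> simp [BB_apply, hx, hz]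
    rw [hB, smul_zero, add_zero]
    rw [hasFDerivAt_iff_isLittleO] at H ⊢
    have hO : (fun q : P4 => (q.1.1, rho q) - (p.1.1, rho p)) =O[𝓝 p] fun q => q - p := by
      apply Asymptotics.IsBigO.of_bound 2
      filter_upwards with q
      have e1 : rho q ≤ 2 * ‖q - p‖ := by
        have : rho q = rho (q - p) := by simp [rho, hx, hz]
        rw [this]; exact rho_le _
      have e2 : ‖q.1.1 - p.1.1‖ ≤ ‖q - p‖ := (norm_fst_le (q-p).1).trans (norm_fst_le (q-p))
      rw [h0, Prod.mk_sub_mk, sub_zero, Prod.norm_def, max_le_iff]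
      constructor
      · simp only; linarith [norm_nonneg (q-p)]
      · simp only [Real.norm_eq_abs, abs_of_nonneg (rho_nonneg q)]; exact e1
    have ht : Tendsto (fun q : P4 => (q.1.1, rho q)) (𝓝 p) (𝓝 (p.1.1, rho p)) := by
      have : Continuous (fun q : P4 => (q.1.1, rho q)) := by unfold rho; fun_prop
      exact this.tendsto p
    have := (H.comp_tendsto ht).trans_isBigO hO
    refine this.congr_left ?_
    intro q
    simp [uu, h0, dt4_apply]
  · have hQ : HasFDerivAt (fun p : P4 => ‖p.1.2‖^2 + p.2^2) ((2:ℝ) • BB p) p := by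
      have a1 : HasFDerivAt (fun p : P4 => p.1.2) ((ContinuousLinearMap.snd ℝ ℝ E2).comp
        (ContinuousLinearMap.fst ℝ (ℝ × E2) ℝ)) p := ContinuousLinearMap.hasFDerivAt 
          ((ContinuousLinearMap.snd ℝ ℝ E2).comp (ContinuousLinearMap.fst ℝ (ℝ × E2) ℝ))
      have a2 : HasFDerivAt (fun p : P4 => p.2) (ContinuousLinearMap.snd ℝ (ℝ × E2) ℝ) p :=
        hasFDerivAt_snd
      refine (a1.norm_sq.add (a2.pow 2)).congr_fderiv ?_
      ext v <;> simp [BB] 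
    have hne : ‖p.1.2‖^2 + p.2^2 ≠ 0 := by rw [← rho_sq]; positivity
    have hr : HasFDerivAt rho ((1 / (2 * rho p)) • ((2:ℝ) • BB p)) p := hQ.sqrt hne
    have := H.comp p (h1.prodMk hr)
    refine this.congr_fderiv ?_
    ext v <;> simp [uu, dt4_apply] <;> field_simp

lemma uu_continuous (k : ℕ) (g : ℝ → ℝ) (hg : ContDiff ℝ ∞ g) : Continuous (uu k g) := by
  have := (hk_contDiff k g hg).continuous
  unfold uu rho
  fun_prop

lemma uu_contDiff_nat (n : ℕ) : ∀ (k : ℕ) (g : ℝ → ℝ) (_ : ContDiff ℝ ∞ g), ContDiff ℝ n (uu k g) := by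
  induction n with
  | zero => 
    intro k g hg
    simpa [contDiff_zero] using uu_continuous k g hg
  | succ n ih =>
    intro k g hg
    push_cast
    rw [contDiff_succ_iff_fderiv]
    refine ⟨fun p => (uu_hasFDerivAt k g hg p).differentiableAt, by simp, ?_⟩
    have : fderiv ℝ (uu k g) = _ := funext fun p => (uu_hasFDerivAt k g hg p).fderiv
    rw [this]
    have i1 := ih k _ (cd_deriv hg)
    have i2 := ih (k+1) _ (cd_deriv (cd_deriv hg))
    have i3 : ContDiff ℝ n BB := BB_contDiff.of_le (by exact_mod_cast le_top)
    fun_prop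

lemma uu_contDiff (k : ℕ) (g : ℝ → ℝ) (hg : ContDiff ℝ ∞ g) : ContDiff ℝ ∞ (uu k g) := by
  rw [contDiff_infty]
  exact fun n => uu_contDiff_nat n k g hg

lemma uu_fderiv (k : ℕ) (g : ℝ → ℝ) (hg : ContDiff ℝ ∞ g) (p v : P4) :
    fderiv ℝ (uu k g) p v = uu k (deriv g) p * v.1.1 + 
      (1 / (2 * ((k:ℝ) + 1)) * uu (k+1) (deriv (deriv g)) p) * (inner ℝ p.1.2 v.1.2 + p.2 * v.2) := by
  rw [(uu_hasFDerivAt k g hg p).fderiv]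
  simp [BB_apply, dt4_apply]

lemma uu_tt (g : ℝ → ℝ) (hg : ContDiff ℝ ∞ g) (p : P4) :
    fderiv ℝ (fun q => fderiv ℝ (uu 0 g) q ((1,0),0)) p ((1,0),0) = uu 0 (deriv (deriv g)) p := by
  have : (fun q => fderiv ℝ (uu 0 g) q ((1,0),0)) = uu 0 (deriv g) := by
    ext q; rw [uu_fderiv 0 g hg]; simp
  rw [this, uu_fderiv 0 _ (cd_deriv hg)]; simp

lemma uu_vv (g : ℝ → ℝ) (hg : ContDiff ℝ ∞ g) (p : P4) (e : E2) (z : ℝ) :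
    fderiv ℝ (fun q => fderiv ℝ (uu 0 g) q ((0,e),z)) p ((0,e),z) = 
     (1/2) * (uu 1 (deriv (deriv g)) p * (‖e‖^2 + z^2) + 
       (1/4) * uu 2 (deriv (deriv (deriv (deriv g)))) p * (inner ℝ p.1.2 e + p.2 * z)^2) := by
  have h2 := cd_deriv (cd_deriv hg)
  have : (fun q => fderiv ℝ (uu 0 g) q ((0,e),z)) = fun q => 
     (1/2) * (uu 1 (deriv (deriv g)) q * BB ((0,e),z) q) := by
    ext q; rw [uu_fderiv 0 g hg]; simp [BB_apply]
    rw [real_inner_comm]; ring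
  rw [this]
  have : HasFDerivAt (fun q => (1/2) * (uu 1 (deriv (deriv g)) q * BB ((0,e),z) q)) _ p :=
    (((uu_hasFDerivAt 1 _ h2 p).mul (BB ((0,e),z)).hasFDerivAt).const_mul (1/2))
  rw [HasFDerivAt.fderiv this]
  simp [BB_apply, dt4_apply, real_inner_self_eq_norm_sq]
  rw [real_inner_comm]
  ring

lemma hk_sum (G : ℝ → ℝ) (hG : ContDiff ℝ ∞ G) (t R : ℝ) :
    3/2 * hk 1 G (t,R) + R^2/8 * hk 2 (deriv (deriv G)) (t,R) = hk 0 G (t,R) := by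
  have h := hk_parts 1 G hG t R
  have h1 : ContDiff ℝ ∞ (deriv G) := cd_deriv hG
  have hd := hG.differentiable (by simp)
  have c1 := h1.continuous
  have c2 := hG.continuous
  have hder : ∀ s ∈ uIcc (-1:ℝ) 1, HasDerivAt (fun s : ℝ => (s - s^3) * G (t + s * R))
     (R * ((1 - s^2)^1 * (s * deriv G (t + s * R))) + (3 * ((1-s^2)^1 * G (t + s*R)) 
        - 2 * ((1-s^2)^0 * G (t+s*R)))) s := by
    intro s _
    have e1 : HasDerivAt (fun s : ℝ => s - s^3) (1 - 3 * s^2) s := by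
      exact ((hasDerivAt_id s).sub (hasDerivAt_pow 3 s)).congr_deriv (by simp)
    have e3 : HasDerivAt (fun s : ℝ => t + s * R) R s := by
      simpa using ((hasDerivAt_id s).mul_const R).const_add t
    have e4 := (hd (t + s * R)).hasDerivAt.comp s e3
    refine (e1.mul e4).congr_deriv ?_
    simp; ring
  have key := intervalIntegral.integral_eq_sub_of_hasDerivAt hder 
    ((by fun_prop : Continuous _).intervalIntegrable _ _)
  rw [intervalIntegral.integral_add ((by fun_prop : Continuous _).intervalIntegrable _ _)
    ((by fun_prop : Continuous _).intervalIntegrable _ _), intervalIntegral.integral_sub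
    ((by fun_prop : Continuous _).intervalIntegrable _ _)
    ((by fun_prop : Continuous _).intervalIntegrable _ _), intervalIntegral.integral_const_mul,
    intervalIntegral.integral_const_mul, intervalIntegral.integral_const_mul, h] at key
  have k1 : ∫ s in (-1:ℝ)..1, (1 - s^2)^1 * G (t + s * R) = hk 1 G (t,R) := rfl
  have k0 : ∫ s in (-1:ℝ)..1, (1 - s^2)^0 * G (t + s * R) = hk 0 G (t,R) := rfl
  rw [k1, k0] at key
  norm_num at key
  linarith

lemma uu_wave (g : ℝ → ℝ) (hg : ContDiff ℝ ∞ g) (p : P4) :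
    fderiv ℝ (fun q => fderiv ℝ (uu 0 g) q ((1,0),0)) p ((1,0),0) =
    (∑ i : Fin 2, fderiv ℝ (fun q => fderiv ℝ (uu 0 g) q ((0,EuclideanSpace.single i 1),0)) p 
      ((0,EuclideanSpace.single i 1),0)) + 
    fderiv ℝ (fun q => fderiv ℝ (uu 0 g) q ((0,0),1)) p ((0,0),1) := by
  simp only [uu_tt g hg, uu_vv g hg]
  have := hk_sum _ (cd_deriv (cd_deriv hg)) p.1.1 (rho p)
  unfold uu
  rw [← this, rho_sq, EuclideanSpace.norm_sq_eq]
  simp [EuclideanSpace.inner_single_right]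
  ring

/-- support -/
lemma hk_zero_mul (f : ℝ → ℝ) (hf : ContDiff ℝ ∞ f) (t R : ℝ) :
    R * hk 0 (deriv f) (t, R) = f (t + R) - f (t - R) := by
  have hd := hf.differentiable (by simp)
  have c1 := (cd_deriv hf).continuous
  have hder : ∀ s ∈ uIcc (-1:ℝ) 1, HasDerivAt (fun s : ℝ => f (t + s * R))
     (R * ((1 - s^2)^0 * (deriv f (t + s * R)))) s := by
    intro s _
    have e3 : HasDerivAt (fun s : ℝ => t + s * R) R s := by
      simpa using ((hasDerivAt_id s).mul_const R).const_add t
    have e4 := (hd (t + s * R)).hasDerivAt.comp s e3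
    refine e4.congr_deriv ?_
    simp; ring
  have key := intervalIntegral.integral_eq_sub_of_hasDerivAt hder 
    ((by fun_prop : Continuous _).intervalIntegrable _ _)
  rw [intervalIntegral.integral_const_mul] at key
  have k0 : ∫ s in (-1:ℝ)..1, (1 - s^2)^0 * deriv f (t + s * R) = hk 0 (deriv f) (t,R) := rfl
  rw [k0] at key
  rw [key]; congr 2 <;> ring
end ILED


namespace ILED
open scoped ContDiff Topology
open Filter

lemma deriv_slice (ψ : ℝ × E2 → ℝ) (h : Differentiable ℝ ψ) (t : ℝ) (x : E2) :
    deriv (fun s => ψ (s, x)) t = fderiv ℝ ψ (t, x) (1, 0) := by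
  have h1 := (h (t, x)).hasFDerivAt
  have h2 : HasDerivAt (fun s : ℝ => (s, x)) ((1:ℝ), (0:E2)) t :=
    (hasDerivAt_id t).prodMk (hasDerivAt_const t x)
  exact (h1.comp_hasDerivAt t h2).deriv

lemma fderiv_slice (ψ : ℝ × E2 → ℝ) (h : Differentiable ℝ ψ) (t : ℝ) (x e : E2) :
    fderiv ℝ (fun y => ψ (t, y)) x e = fderiv ℝ ψ (t, x) (0, e) := by
  have h1 := (h (t, x)).hasFDerivAt
  have h2 : HasFDerivAt (fun y : E2 => (t, y)) (ContinuousLinearMap.inr ℝ ℝ E2) x :=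
    hasFDerivAt_prodMk_right t x
  have h3 : HasFDerivAt (fun y : E2 => ψ (t, y)) _ x := h1.comp x h2
  rw [h3.fderiv]; simp

lemma cd_fderiv_apply {P : Type} [NormedAddCommGroup P] [NormedSpace ℝ P] {ψ : P → ℝ}
    (h : ContDiff ℝ ∞ ψ) (v : P) : ContDiff ℝ ∞ (fun q => fderiv ℝ ψ q v) := by
  have : ContDiff ℝ ∞ (fderiv ℝ ψ) := h.fderiv_right (by simp)
  fun_prop

lemma solvesWave_of (ψ : ℝ × E2 → ℝ) (h : ContDiff ℝ ∞ ψ)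
    (hw : ∀ q, fderiv ℝ (fun q => fderiv ℝ ψ q (1, 0)) q (1, 0) =
      ∑ i : Fin 2, fderiv ℝ (fun q => fderiv ℝ ψ q (0, EuclideanSpace.single i 1)) q
        (0, EuclideanSpace.single i 1)) :
    SolvesWave (fun t x => ψ (t, x)) := by
  intro t x
  have hd := h.differentiable (by simp)
  have hd' : ∀ v, Differentiable ℝ (fun q => fderiv ℝ ψ q v) := fun v =>
    (cd_fderiv_apply h v).differentiable (by simp)
  simp only [lap2, deriv_slice ψ hd, fderiv_slice ψ hd]
  rw [deriv_slice _ (hd' _), hw]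
  refine Finset.sum_congr rfl fun i _ => ?_
  rw [fderiv_slice _ (hd' _)]

section
variable (f : ℝ → ℝ)

def PhiA (a : ℝ) (q : ℝ × E2) : ℝ := ∫ z in (-a)..a, uu 0 (deriv f) (q, z)
def Phi (q : ℝ × E2) : ℝ := ∫ z, uu 0 (deriv f) (q, z)

lemma uu_zero_of_out (hf : ContDiff ℝ ∞ f) (hf0 : ∀ z, 1 ≤ |z| → f z = 0) (p : P4)
    (h : |p.1.1| + 1 ≤ rho p) : uu 0 (deriv f) p = 0 := by
  have h1 := hk_zero_mul f hf p.1.1 (rho p)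
  have := neg_abs_le p.1.1
  have := le_abs_self p.1.1
  have := abs_nonneg p.1.1
  rw [hf0 _ (by rw [le_abs]; left; linarith), hf0 _ (by rw [le_abs]; right; linarith), sub_zero] at h1
  rcases mul_eq_zero.1 h1 with h2 | h2
  · linarith
  · exact h2

lemma uu_zero_of_in (hf : ContDiff ℝ ∞ f) (hf0 : ∀ z, 1 ≤ |z| → f z = 0) (p : P4)
    (h0 : 0 < rho p) (h : rho p ≤ p.1.1 - 1) : uu 0 (deriv f) p = 0 := by
  have h1 := hk_zero_mul f hf p.1.1 (rho p)
  rw [hf0 _ (by rw [le_abs]; left; linarith), hf0 _ (by rw [le_abs]; left; linarith), sub_zero] at h1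
  rcases mul_eq_zero.1 h1 with h2 | h2
  · linarith
  · exact h2

lemma abs_le_rho (p : P4) : |p.2| ≤ rho p := by
  unfold rho
  apply Real.le_sqrt_of_sq_le
  rw [sq_abs]; nlinarith [sq_nonneg ‖p.1.2‖]

lemma norm_le_rho (p : P4) : ‖p.1.2‖ ≤ rho p := by
  unfold rho
  apply Real.le_sqrt_of_sq_le
  nlinarith [sq_nonneg p.2]

lemma Phi_eq_PhiA (hf : ContDiff ℝ ∞ f) (hf0 : ∀ z, 1 ≤ |z| → f z = 0) (a : ℝ) (q : ℝ × E2)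
    (ha : |q.1| + 1 ≤ a) : Phi f q = PhiA f a q := by
  unfold Phi PhiA
  symm
  apply intervalIntegral.integral_eq_integral_of_support_subset
  intro z hz
  by_contra hz'
  apply hz
  apply uu_zero_of_out f hf hf0
  refine ha.trans (le_trans ?_ (abs_le_rho (q, z)))
  simp only [mem_Ioc, not_and_or, not_lt, not_le] at hz'
  rcases hz' with h | h
  · rw [le_abs]; right; linarith
  · rw [le_abs]; left; linarith

lemma PhiA_contDiff (hf : ContDiff ℝ ∞ f) (a : ℝ) : ContDiff ℝ ∞ (PhiA f a) :=
  param_contDiff (uu 0 (deriv f)) (uu_contDiff 0 _ (cd_deriv hf)) _ _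

lemma Phi_eventually (hf : ContDiff ℝ ∞ f) (hf0 : ∀ z, 1 ≤ |z| → f z = 0) (q : ℝ × E2) :
    Phi f =ᶠ[𝓝 q] PhiA f (|q.1| + 2) := by
  have : Continuous (fun w : ℝ × E2 => |w.1|) := by fun_prop
  filter_upwards [this.tendsto q (Iio_mem_nhds (by linarith : |q.1| < |q.1| + 1))] with w hw
  apply Phi_eq_PhiA f hf hf0
  simp at hw
  linarith

lemma Phi_contDiff (hf : ContDiff ℝ ∞ f) (hf0 : ∀ z, 1 ≤ |z| → f z = 0) : ContDiff ℝ ∞ (Phi f) := by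
  rw [contDiff_iff_contDiffAt]
  intro q
  exact ((PhiA_contDiff f hf _).contDiffAt).congr_of_eventuallyEq (Phi_eventually f hf hf0 q)

lemma PhiA_second (hf : ContDiff ℝ ∞ f) (a : ℝ) (q v : ℝ × E2) :
    fderiv ℝ (fun q => fderiv ℝ (PhiA f a) q v) q v =
      ∫ z in (-a)..a, fderiv ℝ (fun p => fderiv ℝ (uu 0 (deriv f)) p (v, 0)) (q, z) (v, 0) := by
  have hu := (uu_contDiff 0 _ (cd_deriv hf))
  have : (fun q => fderiv ℝ (PhiA f a) q v) = fun q => ∫ z in (-a)..a,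
      (fun p => fderiv ℝ (uu 0 (deriv f)) p (v, 0)) (q, z) := by
    ext q
    exact param_fderiv_apply _ hu _ _ _ _
  rw [this]
  exact param_fderiv_apply _ (cd_fderiv_apply hu _) _ _ _ _

lemma uu_z_zero (hf : ContDiff ℝ ∞ f) (hf0 : ∀ z, 1 ≤ |z| → f z = 0) (p : P4)
    (h : |p.1.1| + 1 < rho p) (v : P4) : fderiv ℝ (uu 0 (deriv f)) p v = 0 := by
  have c : Continuous (fun p : P4 => rho p - |p.1.1|) := by unfold rho; fun_prop
  have : uu 0 (deriv f) =ᶠ[𝓝 p] fun _ => 0 := by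
    filter_upwards [c.tendsto p (Ioi_mem_nhds (by linarith : 1 < rho p - |p.1.1|))] with w hw
    apply uu_zero_of_out f hf hf0
    simp at hw
    linarith
  rw [this.fderiv_eq]; simp

lemma PhiA_wave (hf : ContDiff ℝ ∞ f) (hf0 : ∀ z, 1 ≤ |z| → f z = 0) (a : ℝ) (q : ℝ × E2)
    (ha : |q.1| + 1 < a) :
    fderiv ℝ (fun q => fderiv ℝ (PhiA f a) q (1, 0)) q (1, 0) =
      ∑ i : Fin 2, fderiv ℝ (fun q => fderiv ℝ (PhiA f a) q (0, EuclideanSpace.single i 1)) q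
        (0, EuclideanSpace.single i 1) := by
  have hu := (uu_contDiff 0 _ (cd_deriv hf))
  have hc : ∀ v : P4, Continuous (fun p => fderiv ℝ (fun p => fderiv ℝ (uu 0 (deriv f)) p v) p v) :=
    fun v => (cd_fderiv_apply (cd_fderiv_apply hu v) v).continuous
  simp only [PhiA_second f hf]
  rw [← intervalIntegral.integral_finsetSum]
  swap
  · intro i _
    exact ((hc _).comp (by fun_prop : Continuous fun z : ℝ => (q, z))).intervalIntegrable _ _
  simp only [uu_wave _ (cd_deriv hf)]
  rw [intervalIntegral.integral_add]
  rotate_left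
  · refine Continuous.intervalIntegrable ?_ _ _
    exact continuous_finsetSum _ fun i _ => (hc _).comp (by fun_prop : Continuous fun z : ℝ => (q, z))
  · exact ((hc _).comp (by fun_prop : Continuous fun z : ℝ => (q, z))).intervalIntegrable _ _
  rw [add_eq_left]
  have hd := (cd_fderiv_apply hu ((0,0),1)).differentiable (by simp)
  rw [intervalIntegral.integral_eq_sub_of_hasDerivAt
    (f := fun z => fderiv ℝ (uu 0 (deriv f)) (q, z) ((0,0),1))]
  · rw [uu_z_zero f hf hf0, uu_z_zero f hf hf0, sub_zero]
    · refine ha.trans_le (le_trans ?_ (abs_le_rho _))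
      simp [le_abs]
    · refine ha.trans_le (le_trans ?_ (abs_le_rho _))
      simp [le_abs]
  · intro z _
    have h2 : HasDerivAt (fun z : ℝ => (q, z)) ((0 : ℝ × E2), (1:ℝ)) z :=
      (hasDerivAt_const z q).prodMk (hasDerivAt_id z)
    exact (hd (q, z)).hasFDerivAt.comp_hasDerivAt z h2
  · exact ((hc _).comp (by fun_prop : Continuous fun z : ℝ => (q, z))).intervalIntegrable _ _

lemma Phi_wave (hf : ContDiff ℝ ∞ f) (hf0 : ∀ z, 1 ≤ |z| → f z = 0) :
    SolvesWave (fun t x => Phi f (t, x)) := by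
  apply solvesWave_of _ (Phi_contDiff f hf hf0)
  intro q
  have h := Phi_eventually f hf hf0 q
  set a := |q.1| + 2 with ha
  have h2 : ∀ v, fderiv ℝ (fun q => fderiv ℝ (Phi f) q v) q =
      fderiv ℝ (fun q => fderiv ℝ (PhiA f a) q v) q := by
    intro v
    apply Filter.EventuallyEq.fderiv_eq
    filter_upwards [h.fderiv (𝕜 := ℝ)] with w hw
    rw [hw]
  simp only [h2]
  exact PhiA_wave f hf hf0 a q (by rw [ha]; linarith)

lemma Phi_support (hf : ContDiff ℝ ∞ f) (hf0 : ∀ z, 1 ≤ |z| → f z = 0) (q : ℝ × E2)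
    (h : |q.1| + 1 ≤ ‖q.2‖) : Phi f q = 0 := by
  unfold Phi
  rw [← integral_zero ℝ ℝ]
  congr 1
  ext z
  exact uu_zero_of_out f hf hf0 _ (h.trans (norm_le_rho (q, z)))

lemma Phi_decay (hf : ContDiff ℝ ∞ f) (hf0 : ∀ z, 1 ≤ |z| → f z = 0) :
    ∃ C, ∀ q : ℝ × E2, 4 ≤ q.1 → ‖q.2‖ ≤ 1 → |Phi f q| ≤ C / q.1 := by
  obtain ⟨B, hB⟩ : ∃ B, ∀ z, |f z| ≤ B := by
    obtain ⟨B, hB⟩ := isCompact_Icc.exists_bound_of_continuousOn (s := Icc (-1:ℝ) 1) hf.continuous.continuousOn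
    refine ⟨B, fun z => ?_⟩
    by_cases hz : 1 ≤ |z|
    · rw [hf0 z hz, abs_zero]
      exact (norm_nonneg _).trans (hB 0 (by simp))
    · exact hB z (abs_le.1 (by linarith))
  have hB0 : 0 ≤ B := (abs_nonneg _).trans (hB 0)
  refine ⟨24 * B, fun q ht hx => ?_⟩
  set t := q.1 with htdef
  let S : Set ℝ := Icc (t-2) (t+1) ∪ Icc (-(t+1)) (-(t-2))
  have hrho : ∀ z, t - 1 ≤ rho (q, z) → t - 2 ≤ |z| := by
    intro z hz
    have h1 := rho_sq (q, z)
    simp only at h1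
    have h2 : ‖q.2‖^2 ≤ 1 := by nlinarith [norm_nonneg q.2]
    have h3 : (t-1)^2 ≤ rho (q, z)^2 := by
      apply pow_le_pow_left₀ (by linarith) hz
    apply le_abs_self (t-2) |>.trans
    apply sq_le_sq.1
    nlinarith
  have hS : ∀ z, z ∉ S → uu 0 (deriv f) (q, z) = 0 := by
    intro z hz
    by_contra hne
    have h1 : rho (q, z) < t + 1 := by
      by_contra h
      exact hne (uu_zero_of_out f hf hf0 _ (by simp only [← htdef]; rw [abs_of_nonneg (by linarith)]; linarith))
    have h2 : t - 1 < rho (q, z) ∨ rho (q, z) = 0 := by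
      by_contra! h
      exact hne (uu_zero_of_in f hf hf0 _ (lt_of_le_of_ne (rho_nonneg _) h.2.symm) h.1)
    rcases h2 with h2 | h2
    · have h3 := hrho z h2.le
      have h4 : |z| ≤ rho (q, z) := abs_le_rho (q, z)
      apply hz
      rcases abs_cases z with ⟨e, _⟩ | ⟨e, _⟩
      · left; constructor <;> linarith
      · right; constructor <;> linarith
    · apply hne
      have hd0 : deriv f t = 0 := by
        have : f =ᶠ[𝓝 t] fun _ => 0 := by
          filter_upwards [Ioi_mem_nhds (by linarith : 1 < t)] with w hw
          exact hf0 w ((le_of_lt hw).trans (le_abs_self w))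
        rw [this.deriv_eq]; simp
      simp [uu, hk, h2, ← htdef, hd0]
  have hb : ∀ z ∈ S, ‖uu 0 (deriv f) (q, z)‖ ≤ 4 * B / t := by
    intro z hz
    have h1 := hk_zero_mul f hf t (rho (q, z))
    have h4 : |z| ≤ rho (q, z) := abs_le_rho (q, z)
    have h5 : t / 2 ≤ rho (q, z) := by
      rcases hz with hz | hz
      · linarith [hz.1, le_abs_self z]
      · linarith [hz.2, neg_abs_le z]
    have h6 : rho (q, z) * |uu 0 (deriv f) (q, z)| ≤ 2 * B := by
      rw [← abs_of_nonneg (rho_nonneg (q, z)), ← abs_mul]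
      unfold uu
      simp only [← htdef]
      rw [h1]
      refine (abs_sub _ _).trans ?_
      linarith [hB (t + rho (q, z)), hB (t - rho (q, z))]
    rw [Real.norm_eq_abs, le_div_iff₀ (by linarith)]
    nlinarith [abs_nonneg (uu 0 (deriv f) (q, z))]
  have hvol : volume S ≤ ENNReal.ofReal 6 := by
    refine (measure_union_le _ _).trans ?_
    rw [Real.volume_Icc, Real.volume_Icc, ← ENNReal.ofReal_add (by linarith) (by linarith)]
    apply ENNReal.ofReal_le_ofReal; linarith
  unfold Phi
  rw [← setIntegral_eq_integral_of_forall_compl_eq_zero hS]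
  have := norm_setIntegral_le_of_norm_le_const (μ := volume) (hvol.trans_lt ENNReal.ofReal_lt_top) hb
  refine this.trans ?_
  have h6 : volume.real S ≤ 6 := by
    unfold Measure.real
    exact ENNReal.toReal_le_of_le_ofReal (by norm_num) hvol
  calc 4 * B / t * volume.real S ≤ 4 * B / t * 6 := by gcongr
    _ = _ := by ring

lemma Phi_pos (hf : ContDiff ℝ ∞ f) (hf0 : ∀ z, 1 ≤ |z| → f z = 0)
    (hpos : ∀ z, 0 < z → 0 ≤ f z - f (-z)) (hd0 : 0 < deriv f 0) : 0 < Phi f (0, 0) := by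
  unfold Phi
  have hc : Continuous (fun z : ℝ => uu 0 (deriv f) ((0, 0), z)) :=
    (uu_continuous 0 _ (cd_deriv hf)).comp (by fun_prop)
  have h0 : 0 < uu 0 (deriv f) ((0, 0), 0) := by
    simp [uu, hk, rho, hd0]
  apply hc.integral_pos_of_hasCompactSupport_nonneg_nonzero (x := 0)
  · apply HasCompactSupport.intro (isCompact_Icc (a := (-1:ℝ)) (b := 1))
    intro z hz
    apply uu_zero_of_out f hf hf0
    refine le_trans ?_ (abs_le_rho _)
    simp only [mem_Icc, ← abs_le] at hz
    simp; linarith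
  · intro z
    have h1 := hk_zero_mul f hf 0 (rho ((0,0), z))
    rcases (rho_nonneg ((0,0), z)).eq_or_lt with h | h
    · have : z = 0 := by
        have := abs_le_rho ((0,0), z)
        rw [← h] at this
        simpa using this
      simp only [Pi.zero_apply, this]
      exact h0.le
    · have h2 := hpos _ h
      have h3 : 0 ≤ rho ((0,0), z) * hk 0 (deriv f) (0, rho ((0,0), z)) := by
        rw [h1]; simpa using h2
      exact (mul_nonneg_iff_of_pos_left h).1 h3
  · exact h0.ne'
end

lemma exists_f : ∃ f : ℝ → ℝ, ContDiff ℝ ∞ f ∧ (∀ z, 1 ≤ |z| → f z = 0) ∧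
    (∀ z, 0 < z → 0 ≤ f z - f (-z)) ∧ 0 < deriv f 0 := by
  let b : ContDiffBump (0:ℝ) := ⟨1/2, 1, by norm_num, by norm_num⟩
  refine ⟨fun z => z * b z, contDiff_id.mul b.contDiff, ?_, ?_, ?_⟩
  · intro z hz
    simp only [mul_eq_zero]
    right
    apply b.zero_of_le_dist
    simpa using hz
  · intro z hz
    have h1 : 0 ≤ b z := b.nonneg
    have h2 : 0 ≤ b (-z) := b.nonneg
    nlinarith
  · have h1 : HasDerivAt (fun z : ℝ => z * b z) (1 * b 0 + 0 * deriv b 0) 0 :=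
      (hasDerivAt_id (0:ℝ)).mul ((b.contDiff (n := 1)).differentiable (by simp) 0).hasDerivAt
    rw [h1.deriv]
    have : b 0 = 1 := b.one_of_mem_closedBall (by simp [b])
    simp [this]

lemma exists_Phi : ∃ Φ : ℝ → E2 → ℝ, ContDiff ℝ ∞ (fun q : ℝ × E2 => Φ q.1 q.2) ∧
    (∃ F : ℝ → ℝ → ℝ, ∀ t x, Φ t x = F t ‖x‖) ∧ SolvesWave Φ ∧
    (∀ t x, |t| + 1 ≤ ‖x‖ → Φ t x = 0) ∧ 0 < Φ 0 0 ∧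
    ∃ C, ∀ t x, 4 ≤ t → ‖x‖ ≤ 1 → |Φ t x| ≤ C / t := by
  obtain ⟨f, hf, hf0, hpos, hd0⟩ := exists_f
  obtain ⟨C, hC⟩ := Phi_decay f hf hf0
  exact ⟨fun t x => Phi f (t, x), Phi_contDiff f hf hf0,
    ⟨fun t r => ∫ z, hk 0 (deriv f) (t, √(r^2 + z^2)), fun t x => rfl⟩, Phi_wave f hf hf0,
    fun t x h => Phi_support f hf hf0 (t, x) h, Phi_pos f hf hf0 hpos hd0,
    C, fun t x h1 h2 => hC (t, x) h1 h2⟩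

end ILED


namespace ILED
open scoped ContDiff Topology
open Filter

lemma radialDeriv_scale (g : E2 → ℝ) (K c : ℝ) (hc : 0 < c) :
    radialDeriv (fun x => K * g (c • x)) = fun x => K * c * radialDeriv g (c • x) := by
  ext x
  unfold radialDeriv
  have h1 : fderiv ℝ (fun x => K * g (c • x)) x = K • fderiv ℝ (fun x => g (c • x)) x := by
    exact congrFun (fderiv_const_smul_field (𝕜 := ℝ) (f := fun x => g (c • x)) K) x
  have h2 : fderiv ℝ (fun x => g (c • x)) x = c • fderiv ℝ g (c • x) := fderiv_comp_smul c
  have h3 : ‖c • x‖⁻¹ • c • x = ‖x‖⁻¹ • x := by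
    rw [norm_smul, Real.norm_of_nonneg hc.le, smul_smul]
    congr 1
    field_simp
  rw [h1, h2, h3]
  simp [mul_assoc]
  ring

lemma radialDeriv_iter_scale (m : ℕ) (g : E2 → ℝ) (c : ℝ) (hc : 0 < c) :
    radialDeriv^[m] (fun x => g (c • x)) = fun x => c^m * radialDeriv^[m] g (c • x) := by
  induction m with
  | zero => simp
  | succ m ih =>
    rw [Function.iterate_succ_apply', ih, radialDeriv_scale _ _ _ hc, Function.iterate_succ_apply']
    simp [pow_succ]

lemma deriv_scale (h : ℝ → ℝ) (K c : ℝ) :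
    deriv (fun t => K * h (c * t)) = fun t => K * c * deriv h (c * t) := by
  ext t
  rw [deriv_const_mul_field, deriv_comp_mul_left]
  simp [mul_assoc]

lemma deriv_iter_scale (j : ℕ) (h : ℝ → ℝ) (K c : ℝ) :
    deriv^[j] (fun t => K * h (c * t)) = fun t => K * c^j * deriv^[j] h (c * t) := by
  induction j with
  | zero => simp
  | succ m ih =>
    rw [Function.iterate_succ_apply', ih, deriv_scale, Function.iterate_succ_apply']
    simp [pow_succ, mul_assoc]

lemma lap2_scale (g : E2 → ℝ) (c : ℝ) (x : E2) :
    lap2 (fun x => g (c • x)) x = c^2 * lap2 g (c • x) := by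
  unfold lap2
  rw [Finset.mul_sum]
  refine Finset.sum_congr rfl fun i _ => ?_
  have h2 : ∀ y, fderiv ℝ (fun x => g (c • x)) y = c • fderiv ℝ g (c • y) := fun y => fderiv_comp_smul c
  simp only [h2, smul_apply]
  have h1 := congrFun (fderiv_const_smul_field (𝕜 := ℝ) 
    (f := fun x => fderiv ℝ g (c • x) (EuclideanSpace.single i 1)) c) x
  have h3 : fderiv ℝ (fun x => fderiv ℝ g (c • x) (EuclideanSpace.single i 1)) x = c • fderiv ℝ
    (fun y => fderiv ℝ g y (EuclideanSpace.single i 1)) (c • x) := 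
      fderiv_comp_smul (f := fun y => fderiv ℝ g y (EuclideanSpace.single i 1)) c
  have h4 : fderiv ℝ (fun x => c • fderiv ℝ g (c • x) (EuclideanSpace.single i 1)) x =
    c • c • fderiv ℝ (fun y => fderiv ℝ g y (EuclideanSpace.single i 1)) (c • x) := by
    rw [← h3]; exact h1
  rw [h4]
  simp [pow_two, mul_assoc]

lemma radialDeriv_zero_on (g : E2 → ℝ) (O : Set E2) (hO : IsOpen O) (h : ∀ x ∈ O, g x = 0) (m : ℕ) :
    ∀ x ∈ O, radialDeriv^[m] g x = 0 := by
  induction m with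
  | zero => simpa using h
  | succ m ih =>
    intro x hx
    rw [Function.iterate_succ_apply']
    have : radialDeriv^[m] g =ᶠ[𝓝 x] fun _ => 0 := by
      filter_upwards [hO.mem_nhds hx] with y hy using ih y hy
    unfold radialDeriv at *
    rw [this.fderiv_eq]; simp

lemma deriv_iter_zero (h : ℝ → ℝ) (t : ℝ) (hh : h =ᶠ[𝓝 t] fun _ => 0) (j : ℕ) :
    deriv^[j] h =ᶠ[𝓝 t] fun _ => 0 := by
  induction j with
  | zero => simpa using hh
  | succ j ih =>
    rw [Function.iterate_succ_apply']
    filter_upwards [ih.deriv] with s hs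
    rw [hs]; simp

lemma G_support (Φ : ℝ → E2 → ℝ) (hs : ∀ t x, |t| + 1 ≤ ‖x‖ → Φ t x = 0) (j m : ℕ) (y : E2) (hy : 1 < ‖y‖) :
    deriv^[j] (fun t => radialDeriv^[m] (Φ t) y) 0 = 0 := by
  refine (deriv_iter_zero _ 0 ?_ j).eq_of_nhds
  have : Continuous (fun t : ℝ => |t| + 1) := by fun_prop
  filter_upwards [this.tendsto 0 (Iio_mem_nhds (by simpa using hy : |(0:ℝ)| + 1 < ‖y‖))] with t ht
  have hO : IsOpen {x : E2 | |t| + 1 < ‖x‖} := isOpen_lt (by fun_prop) (by fun_prop)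
  exact radialDeriv_zero_on (Φ t) _ hO (fun x hx => hs t x (le_of_lt hx)) m y ht

lemma integral_scale (h : E2 → ℝ) (T : ℝ) (hT : 0 < T) :
    ∫ x, h (T⁻¹ • x) = T^2 * ∫ x, h x := by
  rw [Measure.integral_comp_inv_smul_of_nonneg _ _ hT.le]
  simp

lemma weighted_bound (G : E2 → ℝ) (hG : ∀ y, 1 < ‖y‖ → G y = 0) (T p : ℝ) (hT : 1 ≤ T) (hp : 0 ≤ p)
    (hp1 : p < 1) : ∫ y, (1 + T * ‖y‖)^p * (G y)^2 ≤ 2 * T^p * ∫ y, (G y)^2 := by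
  have hpt : ∀ y, (1 + T * ‖y‖)^p * (G y)^2 ≤ 2 * T^p * (G y)^2 := by
    intro y
    by_cases hy : 1 < ‖y‖
    · simp [hG y hy]
    · push Not at hy
      gcongr
      calc (1 + T * ‖y‖)^p ≤ (2 * T)^p := by
            apply Real.rpow_le_rpow (by positivity) _ hp
            nlinarith
        _ = 2^p * T^p := Real.mul_rpow (by norm_num) (by linarith)
        _ ≤ 2^(1:ℝ) * T^p := by
            gcongr
            norm_num
        _ = _ := by simp
  have hcont : Continuous (fun y : E2 => (1 + T * ‖y‖)^p) := by
    apply Continuous.rpow_const (by fun_prop)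
    intro y; left; positivity
  rw [← integral_const_mul]
  by_cases hi : Integrable (fun y => (G y)^2)
  · apply integral_mono_of_nonneg _ (hi.const_mul _)
    · filter_upwards with y using hpt y
    · filter_upwards with y
      simp only [Pi.zero_apply]; positivity
  · rw [integral_undef, integral_const_mul, integral_undef hi]
    · simp
    · intro hi2
      apply hi
      have hci : Continuous (fun y : E2 => ((1 + T * ‖y‖)^p)⁻¹) :=
        hcont.inv₀ (fun y => by positivity)
      have := hi2.bdd_mul (c := 1) hci.aestronglyMeasurable (by
        filter_upwards with y
        rw [norm_inv, Real.norm_of_nonneg (by positivity)]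
        apply inv_le_one_of_one_le₀
        apply Real.one_le_rpow _ hp
        nlinarith [norm_nonneg y])
      refine this.congr ?_
      filter_upwards with y
      have : (1 + T * ‖y‖)^p ≠ 0 := by positivity
      field_simp

lemma polar_norm (r θ : ℝ) : ‖polarPt r θ‖ = |r| := by
  rw [EuclideanSpace.norm_eq, ← Real.sqrt_sq_eq_abs]
  congr 1
  simp [polarPt, mul_pow, ← mul_add]

lemma lower_aux (h : ℝ → ℝ) (a b m : ℝ) (ha : 0 ≤ a) (hab : a ≤ b) (hi : IntegrableOn h (Ioc 0 b))
    (h0 : ∀ x, 0 ≤ h x) (hm : ∀ x ∈ Ioc 0 a, m ≤ h x) : a * m ≤ ∫ x in Ioc 0 b, h x := by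
  have hsub : Ioc 0 a ⊆ Ioc 0 b := Ioc_subset_Ioc_right hab
  calc a * m = ∫ x in Ioc 0 a, m := by simp [ha]
    _ ≤ ∫ x in Ioc 0 a, h x := setIntegral_mono_on (by simp) (hi.mono_set hsub) measurableSet_Ioc hm
    _ ≤ _ := setIntegral_mono_set hi (by filter_upwards with x using h0 x) hsub.eventuallyLE

section
variable (Φ : ℝ → E2 → ℝ)

def ph (T t : ℝ) (x : E2) : ℝ := Φ (T⁻¹ * t) (T⁻¹ • x)

def Q (T t : ℝ) : ℝ := ∫ θ in Set.Ioo (0:ℝ) (2 * π), ∫ r in Set.Ioc (0:ℝ) 1, (ph Φ T t (polarPt r θ)) ^ 2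

lemma Q_eq (hr : ∃ F : ℝ → ℝ → ℝ, ∀ t x, Φ t x = F t ‖x‖) (T t : ℝ) :
    Q Φ T t = 2 * π * ∫ r in Set.Ioc (0:ℝ) 1, (ph Φ T t (polarPt r 0)) ^ 2 := by
  obtain ⟨F, hF⟩ := hr
  unfold Q ph
  simp only [hF, norm_smul, polar_norm]
  simp [Real.pi_nonneg]

lemma polar_cont : Continuous (fun r : ℝ => polarPt r 0) := by
  unfold polarPt
  simp only [WithLp.equiv_symm_apply]
  apply (PiLp.continuous_toLp 2 _).comp
  refine continuous_pi fun i => ?_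
  fin_cases i <;> simp <;> fun_prop

lemma ph_cont (hc : Continuous (fun q : ℝ × E2 => Φ q.1 q.2)) (T : ℝ) :
    Continuous (fun q : ℝ × ℝ => (ph Φ T q.1 (polarPt q.2 0))^2) := by
  have h := polar_cont
  unfold ph
  have : Continuous (fun q : ℝ × ℝ => (T⁻¹ * q.1, T⁻¹ • polarPt q.2 0)) := by fun_prop
  exact (hc.comp this).pow 2

lemma Q_cont (hc : Continuous (fun q : ℝ × E2 => Φ q.1 q.2))
    (hr : ∃ F : ℝ → ℝ → ℝ, ∀ t x, Φ t x = F t ‖x‖) (T : ℝ) : Continuous (Q Φ T) := by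
  have : Q Φ T = fun t => 2 * π * ∫ r in (0:ℝ)..1, (ph Φ T t (polarPt r 0)) ^ 2 := by
    ext t; rw [Q_eq Φ hr, intervalIntegral.integral_of_le zero_le_one]
  rw [this]
  apply Continuous.mul continuous_const
  exact intervalIntegral.continuous_parametric_intervalIntegral_of_continuous'
      (f := fun t r => (ph Φ T t (polarPt r 0)) ^ 2) (ph_cont Φ hc T) 0 1

lemma Q_nonneg (T t : ℝ) : 0 ≤ Q Φ T t := by
  unfold Q
  exact integral_nonneg fun θ => integral_nonneg fun r => by positivity

lemma Q_lower (hc : Continuous (fun q : ℝ × E2 => Φ q.1 q.2))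
    (hr : ∃ F : ℝ → ℝ → ℝ, ∀ t x, Φ t x = F t ‖x‖) (h0 : 0 < Φ 0 0) :
    ∃ δ > 0, ∀ T, 1 ≤ T → δ * T ≤ ∫ t in Ioc 0 T, Q Φ T t := by
  obtain ⟨ε, hε, hball⟩ := Metric.continuous_iff.1 hc (0, 0) (Φ 0 0 / 2) (by positivity)
  set e := min (ε / 2) 1 with he
  have he0 : 0 < e := by positivity
  have he1 : e ≤ 1 := min_le_right _ _
  have hlow : ∀ t y, |t| ≤ e → ‖y‖ ≤ e → Φ 0 0 / 2 ≤ Φ t y := by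
    intro t y ht hy
    have hee : e < ε := (min_le_left _ _).trans_lt (by linarith)
    have := hball (t, y) (by
      rw [Prod.dist_eq, max_lt_iff]; constructor <;> simp <;> linarith)
    rw [Real.dist_eq, abs_lt] at this
    simp only at this
    linarith
  refine ⟨e * (2 * π * (e * (Φ 0 0 / 2)^2)), by positivity, fun T hT => ?_⟩
  have hT0 : 0 < T := by linarith
  have key := lower_aux (Q Φ T) (e * T) T (2 * π * (e * (Φ 0 0 / 2)^2)) (by positivity) (by nlinarith)
    ((Q_cont Φ hc hr T).continuousOn.integrableOn_Icc.mono_set Ioc_subset_Icc_self) (Q_nonneg Φ T) ?_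
  · linarith
  · intro t ht
    rw [Q_eq Φ hr]
    gcongr
    apply lower_aux (fun r => (ph Φ T t (polarPt r 0)) ^ 2) e 1 _ he0.le he1
    · have : Continuous (fun r => (ph Φ T t (polarPt r 0)) ^ 2) :=
        (ph_cont Φ hc T).comp (by fun_prop : Continuous fun r : ℝ => (t, r))
      exact this.continuousOn.integrableOn_Icc.mono_set Ioc_subset_Icc_self
    · intro x; positivity
    · intro r hrr
      gcongr
      apply hlow
      · rw [abs_of_nonneg (by have := ht.1; positivity), inv_mul_le_iff₀ hT0]; linarith [ht.2]
      · rw [norm_smul, polar_norm, abs_of_pos hrr.1, norm_inv, Real.norm_of_nonneg hT0.le,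
          inv_mul_le_iff₀ hT0]
        nlinarith [hrr.2]

lemma Q_int (hc : Continuous (fun q : ℝ × E2 => Φ q.1 q.2))
    (hr : ∃ F : ℝ → ℝ → ℝ, ∀ t x, Φ t x = F t ‖x‖)
    (hd : ∃ C, ∀ t x, 4 ≤ t → ‖x‖ ≤ 1 → |Φ t x| ≤ C / t) (T : ℝ) (hT : 1 ≤ T) :
    IntegrableOn (Q Φ T) (Ioi 0) := by
  obtain ⟨C, hC⟩ := hd
  have hT0 : 0 < T := by linarith
  have hQ := Q_cont Φ hc hr T
  rw [← Ioc_union_Ioi_eq_Ioi (show (0:ℝ) ≤ 4 * T by positivity)]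
  apply IntegrableOn.union
  · exact hQ.continuousOn.integrableOn_Icc.mono_set Ioc_subset_Icc_self
  · have hi : IntegrableOn (fun t : ℝ => (2 * π * (C * T)^2) * t^(-2:ℝ)) (Ioi (4 * T)) :=
      (integrableOn_Ioi_rpow_of_lt (by norm_num) (by positivity)).const_mul _
    refine Integrable.mono' hi hQ.aestronglyMeasurable ?_
    refine (ae_restrict_iff' measurableSet_Ioi).2 ?_
    filter_upwards with t ht
    have ht : 4 * T < t := ht
    have ht0 : 0 < t := by linarith
    rw [Real.norm_of_nonneg (Q_nonneg Φ T t), Q_eq Φ hr]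
    have hpt : ∀ r ∈ Ioc (0:ℝ) 1, (ph Φ T t (polarPt r 0)) ^ 2 ≤ (C * T)^2 * t^(-2:ℝ) := by
      intro r hrr
      have h1 := hC (T⁻¹ * t) (T⁻¹ • polarPt r 0) (by rw [le_inv_mul_iff₀ hT0]; linarith)
        (by
          rw [norm_smul, polar_norm, abs_of_pos hrr.1, norm_inv, Real.norm_of_nonneg hT0.le,
          inv_mul_le_iff₀ hT0]
          nlinarith [hrr.2])
      have h2 : C / (T⁻¹ * t) = C * T / t := by field_simp
      rw [h2] at h1
      have h3 : t^(-2:ℝ) = (t^2)⁻¹ := by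
        rw [Real.rpow_neg ht0.le]; norm_num
      rw [h3, ← div_eq_mul_inv, ← div_pow]
      unfold ph
      rw [← sq_abs]
      gcongr
    have hcr : Continuous (fun r => (ph Φ T t (polarPt r 0)) ^ 2) :=
        (ph_cont Φ hc T).comp (by fun_prop : Continuous fun r : ℝ => (t, r))
    have hle : ∫ r in Ioc (0:ℝ) 1, (ph Φ T t (polarPt r 0)) ^ 2 ≤ (C * T)^2 * t^(-2:ℝ) := by
     calc ∫ r in Ioc (0:ℝ) 1, (ph Φ T t (polarPt r 0)) ^ 2 
        ≤ ∫ r in Ioc (0:ℝ) 1, (C * T)^2 * t^(-2:ℝ) := 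
          setIntegral_mono_on (hcr.continuousOn.integrableOn_Icc.mono_set Ioc_subset_Icc_self)
            (continuous_const.continuousOn.integrableOn_Icc.mono_set Ioc_subset_Icc_self)
            measurableSet_Ioc hpt
      _ = _ := by rw [setIntegral_const]; simp
    calc _ ≤ 2 * π * ((C * T)^2 * t^(-2:ℝ)) := mul_le_mul_of_nonneg_left hle (by positivity)
      _ = _ := by ring

lemma ph_contDiff (hc : ContDiff ℝ ∞ (fun q : ℝ × E2 => Φ q.1 q.2)) (T : ℝ) :
    ContDiff ℝ ∞ (fun q : ℝ × E2 => ph Φ T q.1 q.2) := by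
  unfold ph
  exact hc.comp (by fun_prop : ContDiff ℝ ∞ (fun q : ℝ × E2 => (T⁻¹ * q.1, T⁻¹ • q.2)))

lemma ph_wave (hw : SolvesWave Φ) (T : ℝ) : SolvesWave (ph Φ T) := by
  intro t x
  have h1 := deriv_iter_scale 2 (fun s => Φ s (T⁻¹ • x)) 1 T⁻¹
  have h2 := congrFun h1 t
  have h3 := lap2_scale (Φ (T⁻¹ * t)) T⁻¹ x
  have h4 := hw (T⁻¹ * t) (T⁻¹ • x)
  simp only [Function.iterate_succ, Function.iterate_zero, Function.comp_apply, one_mul, id] at h2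
  calc _ = _ := h2
    _ = _ := by
      rw [show lap2 (ph Φ T t) x = _ from h3, ← h4]

lemma ph_compact (hs : ∀ t x, |t| + 1 ≤ ‖x‖ → Φ t x = 0) (T : ℝ) (hT : 1 ≤ T) : CompactData (ph Φ T) := by
  have hT0 : 0 < T := by linarith
  refine ⟨Metric.closedBall 0 T, isCompact_closedBall 0 T, fun x hx => ?_⟩
  have hx1 : 1 < ‖T⁻¹ • x‖ := by
    simp only [Metric.mem_closedBall, dist_zero_right, not_le] at hx
    rw [norm_smul, norm_inv, Real.norm_of_nonneg hT0.le, lt_inv_mul_iff₀ hT0]; linarith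
  have he : (fun s => ph Φ T s x) =ᶠ[𝓝 0] fun _ => 0 := by
    have : Continuous (fun t : ℝ => |T⁻¹ * t| + 1) := by fun_prop
    filter_upwards [this.tendsto 0 (Iio_mem_nhds (by simpa using hx1 : |T⁻¹ * (0:ℝ)| + 1 < ‖T⁻¹ • x‖))] with t ht
    exact hs _ _ (le_of_lt ht)
  exact ⟨he.eq_of_nhds, by rw [he.deriv_eq]; simp⟩

lemma ph_deriv (T : ℝ) (hT : 0 < T) (j k : ℕ) (hj : j ≤ k) (x : E2) :
    deriv^[j] (fun t => radialDeriv^[k - j] (ph Φ T t) x) 0 =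
     (T⁻¹)^k * deriv^[j] (fun t => radialDeriv^[k - j] (Φ t) (T⁻¹ • x)) 0 := by
  have h1 : (fun t => radialDeriv^[k - j] (ph Φ T t) x) = fun t => (T⁻¹)^(k-j) *
      (fun s => radialDeriv^[k - j] (Φ s) (T⁻¹ • x)) (T⁻¹ * t) := by
    ext t
    exact congrFun (radialDeriv_iter_scale (k-j) (Φ (T⁻¹ * t)) T⁻¹ (by positivity)) x
  have h2 := congrFun (deriv_iter_scale j (fun s => radialDeriv^[k-j] (Φ s) (T⁻¹ • x))
    ((T⁻¹)^(k-j)) T⁻¹) 0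
  rw [h1]
  refine h2.trans ?_
  rw [mul_zero, ← pow_add, Nat.sub_add_cancel hj]

lemma ph_data (hs : ∀ t x, |t| + 1 ≤ ‖x‖ → Φ t x = 0) (T : ℝ) (hT : 1 ≤ T) (p : ℝ) (hp : 0 ≤ p) (hp1 : p < 1)
    (j k : ℕ) (hj : j ≤ k) :
    T ^ (2 * (k : ℝ) - 1 - p) * ∫ x : E2,
      (1 + ‖x‖) ^ p * (deriv^[j] (fun t => radialDeriv^[k - j] (ph Φ T t) x) 0) ^ 2 ≤
    2 * T * ∫ y : E2, (deriv^[j] (fun t => radialDeriv^[k - j] (Φ t) y) 0) ^ 2 := by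
  have hT0 : 0 < T := by linarith
  set G : E2 → ℝ := fun y => deriv^[j] (fun t => radialDeriv^[k - j] (Φ t) y) 0 with hG
  have h1 : ∀ x : E2, (1 + ‖x‖) ^ p * (deriv^[j] (fun t => radialDeriv^[k - j] (ph Φ T t) x) 0) ^ 2 =
     (T⁻¹)^(2*k) * (fun y => (1 + T * ‖y‖)^p * (G y)^2) (T⁻¹ • x) := by
    intro x
    rw [ph_deriv Φ T hT0 j k hj]
    simp only [hG, norm_smul, norm_inv, Real.norm_of_nonneg hT0.le]
    rw [mul_inv_cancel_left₀ hT0.ne']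
    ring
  simp only [h1]
  have h5 : ∫ a : E2, (1 + T * ‖T⁻¹ • a‖)^p * (G (T⁻¹ • a))^2 = T^2 * ∫ y, (1 + T * ‖y‖)^p * (G y)^2 :=
    integral_scale (fun y => (1 + T * ‖y‖)^p * (G y)^2) T hT0
  rw [integral_const_mul, h5]
  have h2 := weighted_bound G (fun y hy => G_support Φ hs j (k-j) y hy) T p hT hp hp1
  have h3 : T ^ (2 * (k : ℝ) - 1 - p) * ((T⁻¹)^(2*k) * T^2) * T^p = T := by
    rw [Real.rpow_sub hT0, Real.rpow_sub hT0, Real.rpow_one]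
    rw [show T^(2 * (k:ℝ)) = T^(2*k) by exact_mod_cast Real.rpow_natCast T (2*k)]
    rw [inv_pow]
    field_simp
  calc _ = T ^ (2 * (k : ℝ) - 1 - p) * ((T⁻¹)^(2*k) * T^2) * ∫ y, (1 + T * ‖y‖)^p * (G y)^2 := by ring
    _ ≤ T ^ (2 * (k : ℝ) - 1 - p) * ((T⁻¹)^(2*k) * T^2) * (2 * T^p * ∫ y, (G y)^2) := by gcongr
    _ = 2 * (T ^ (2 * (k : ℝ) - 1 - p) * ((T⁻¹)^(2*k) * T^2) * T^p) * ∫ y, (G y)^2 := by ring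
    _ = _ := by rw [h3]

lemma ph_energy (T : ℝ) (hT : 0 < T) :
    ∫ x : E2, ((deriv (fun s => ph Φ T s x) 0) ^ 2 + ‖fderiv ℝ (ph Φ T 0) x‖ ^ 2) =
    ∫ x : E2, ((deriv (fun s => Φ s x) 0) ^ 2 + ‖fderiv ℝ (Φ 0) x‖ ^ 2) := by
  have h1 : ∀ x : E2, ((deriv (fun s => ph Φ T s x) 0) ^ 2 + ‖fderiv ℝ (ph Φ T 0) x‖ ^ 2) =
     (T^2)⁻¹ * (fun x => ((deriv (fun s => Φ s x) 0) ^ 2 + ‖fderiv ℝ (Φ 0) x‖ ^ 2)) (T⁻¹ • x) := by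
    intro x
    have e1 := congrFun (deriv_scale (fun s => Φ s (T⁻¹ • x)) 1 T⁻¹) 0
    simp only [one_mul, mul_zero] at e1
    have e2 : fderiv ℝ (fun x => Φ 0 (T⁻¹ • x)) x = T⁻¹ • fderiv ℝ (Φ 0) (T⁻¹ • x) :=
      fderiv_comp_smul (f := Φ 0) T⁻¹
    unfold ph
    rw [mul_zero, e1, e2, norm_smul, norm_inv, Real.norm_of_nonneg hT.le]
    ring
  simp only [h1]
  have h5 := integral_scale (fun x => ((deriv (fun s => Φ s x) 0) ^ 2 + ‖fderiv ℝ (Φ 0) x‖ ^ 2)) T hT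
  rw [integral_const_mul]
  refine (congrArg _ h5).trans ?_
  rw [inv_mul_cancel_left₀ (by positivity)]

end
end ILED

open ILED

/-- Failure of uniform integrated local energy decay for radially symmetric waves in two
space dimensions: for each `T ≥ 1` there is a smooth radially symmetric solution `φ_T` of the
wave equation with compactly supported data whose local spacetime `L²` norm on `[0,T]`
dominates `T^{2k−1−p}` times any `r^p`-weighted `k`-th order data norm.  In particular no
uniform integrated local energy decay estimate holds. -/
theorem failure_of_integrated_local_energy_decay :
    (∃ φ : ℝ → ℝ → EuclideanSpace ℝ (Fin 2) → ℝ,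
      (∀ T : ℝ, 1 ≤ T →
        ContDiff ℝ (⊤ : ℕ∞) (fun q : ℝ × EuclideanSpace ℝ (Fin 2) => φ T q.1 q.2)
        ∧ (∃ F : ℝ → ℝ → ℝ, ∀ t : ℝ, ∀ x : EuclideanSpace ℝ (Fin 2), φ T t x = F t ‖x‖)
        ∧ SolvesWave (φ T) ∧ CompactData (φ T))
      ∧ (∀ k : ℕ, 1 ≤ k → ∃ c > (0:ℝ), ∀ T : ℝ, 1 ≤ T → ∀ p : ℝ, 0 ≤ p → p < 1 →
          c * T ^ (2 * (k : ℝ) - 1 - p) *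
            (∑ j ∈ Finset.range (k + 1),
              ∫ x : EuclideanSpace ℝ (Fin 2),
                (1 + ‖x‖) ^ p * (deriv^[j] (fun t => radialDeriv^[k - j] (φ T t) x) 0) ^ 2)
          ≤ ∫ t in Set.Ioc (0:ℝ) T, ∫ θ in Set.Ioo (0:ℝ) (2 * π),
              ∫ r in Set.Ioc (0:ℝ) 1, (φ T t (polarPt r θ)) ^ 2))
    ∧ ¬ ∃ C > (0:ℝ), ∀ ψ : ℝ → EuclideanSpace ℝ (Fin 2) → ℝ,
        ContDiff ℝ (⊤ : ℕ∞) (fun q : ℝ × EuclideanSpace ℝ (Fin 2) => ψ q.1 q.2) →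
        SolvesWave ψ → CompactData ψ →
        (∫ t in Set.Ioi (0:ℝ), ∫ θ in Set.Ioo (0:ℝ) (2 * π),
            ∫ r in Set.Ioc (0:ℝ) 1, (ψ t (polarPt r θ)) ^ 2)
          ≤ C * ∫ x : EuclideanSpace ℝ (Fin 2),
              ((deriv (fun s => ψ s x) 0) ^ 2 + ‖fderiv ℝ (ψ 0) x‖ ^ 2) := by
  obtain ⟨Φ, hsm, hr, hw, hs, h0, hd⟩ := exists_Phi
  have hc := hsm.continuous
  obtain ⟨δ, hδ, hlow⟩ := Q_lower Φ hc hr h0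
  refine ⟨⟨ph Φ, fun T hT => ⟨ph_contDiff Φ hsm T, ?_, ph_wave Φ hw T, ph_compact Φ hs T hT⟩, ?_⟩, ?_⟩
  · obtain ⟨F, hF⟩ := hr
    refine ⟨fun t r => F (T⁻¹ * t) (‖T⁻¹‖ * r), fun t x => ?_⟩
    rw [ph, hF, norm_smul]
  · intro k hk
    set N : ℝ := ∑ j ∈ Finset.range (k + 1),
      ∫ y : E2, (deriv^[j] (fun t => radialDeriv^[k - j] (Φ t) y) 0) ^ 2 with hN
    have hN0 : 0 ≤ N := Finset.sum_nonneg fun j _ => integral_nonneg fun y => by positivity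
    refine ⟨δ / (2 * N + 1), by positivity, fun T hT p hp hp1 => ?_⟩
    refine le_trans ?_ (hlow T hT)
    rw [mul_assoc]
    have h1 : ∑ j ∈ Finset.range (k + 1), T ^ (2 * (k : ℝ) - 1 - p) * ∫ x : E2,
      (1 + ‖x‖) ^ p * (deriv^[j] (fun t => radialDeriv^[k - j] (ph Φ T t) x) 0) ^ 2 ≤ 2 * T * N := by
      rw [hN, Finset.mul_sum]
      refine Finset.sum_le_sum fun j hj => ?_
      exact ph_data Φ hs T hT p hp hp1 j k (by simp at hj; omega)
    rw [← Finset.mul_sum] at h1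
    calc _ ≤ δ / (2 * N + 1) * (2 * T * N) := mul_le_mul_of_nonneg_left h1 (by positivity)
      _ = δ * T * (2 * N / (2 * N + 1)) := by ring
      _ ≤ δ * T * 1 := by
        gcongr
        rw [div_le_one (by positivity)]; linarith
      _ = δ * T := mul_one _
  · rintro ⟨C, hC, h⟩
    set En : ℝ := ∫ x : E2, ((deriv (fun s => Φ s x) 0) ^ 2 + ‖fderiv ℝ (Φ 0) x‖ ^ 2) with hEn
    have hE0 : 0 ≤ En := integral_nonneg fun x => by positivity
    have key : ∀ T, 1 ≤ T → δ * T ≤ C * En := by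
      intro T hT
      have h1 := h (ph Φ T) (ph_contDiff Φ hsm T) (ph_wave Φ hw T) (ph_compact Φ hs T hT)
      rw [ph_energy Φ T (by linarith)] at h1
      refine (hlow T hT).trans (le_trans ?_ h1)
      exact setIntegral_mono_set (Q_int Φ hc hr hd T hT)
        (Filter.Eventually.of_forall fun t => Q_nonneg Φ T t) Ioc_subset_Ioi_self.eventuallyLE
    have := key (C * En / δ + 1) (by linarith [show 0 ≤ C * En / δ by positivity])
    rw [mul_add, mul_div_cancel₀ _ hδ.ne'] at this
    linarith
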